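/- Let H be a complex Hilbert space, (a_q)_{q∈ℤ³} a family of bounded operators on H satisfying the CAR, K = (K(ℓ))_{ℓ∈ℤ³∖{0}} a family of real symmetric matrices on the lenses with K(−ℓ)_{−r,−s} = K(ℓ)_{r,s}, and S the associated quasi-bosonic Bogoliubov generator. Then for every k ∈ ℤ³∖{0} and p ∈ L_k: [S, b_p*(k)] = Σ_{s∈L_k} K(k)_{p,s} b_{−s}(−k) + 𝓔_p(k), where 𝓔_p(k) := (1/2) Σ_{ℓ∈ℤ³∖{0}} Σ_{r,s∈L_ℓ} K(ℓ)_{r,s} { ε_{r,p}(ℓ,k), b_{−s}(−ℓ) }, with ε_{r,p}(ℓ,k) := −( δ_{r,p}·a*_{p−k} a_{r−ℓ} + δ_{r−ℓ,p−k}·a_p* a_r ) and {X,Y} := XY + YX. -/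

import Mathlib

/-! The pair operators satisfy `[b_r(ℓ), b_p^*(k)] = δ_{r,p} δ_{ℓ,k} + ε_{r,p}(ℓ,k)` whenever `r ∈ L_ℓ`
and `p ∈ L_k` (`comm_bop_bopS`); the two other contractions vanish because they would identify a
momentum outside the Fermi ball with one inside it. Pair creation operators commute with each other
(`bopS_commute`), so by the Leibniz rule only
`b_r(ℓ) [b_{-s}(-ℓ), b_p^*(k)] + [b_r(ℓ), b_p^*(k)] b_{-s}(-ℓ)` survives in `[S, b_p^*(k)]`.
The substitution `(ℓ, r, s) ↦ (-ℓ, -s, -r)`, under which the weights `K(ℓ)_{r,s}` are invariant, turns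
the first summand into `b_{-s}(-ℓ) [b_r(ℓ), b_p^*(k)]`. The Kronecker deltas then contribute twice the
linear term, and the `ε` parts form the anticommutator in `𝓔_p(k)`.

All series are finite sums: a lens is finite and only finitely many `K(ℓ)` are nonzero, so every
triple sum can be taken over one finite set of momenta that is symmetric under negation. -/

open scoped BigOperators
open MeasureTheory

noncomputable section

attribute [local instance] Classical.propDecidable

/-- The momentum lattice `ℤ³`. -/
abbrev Z3 : Type := Fin 3 → ℤ

/-- Squared Euclidean norm `|p|²` of an integer vector, as a real number. -/
def nsq (p : Z3) : ℝ := ∑ i, ((p i : ℝ)) ^ 2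

/-- The Fermi ball `B_F = {k ∈ ℤ³ : |k| ≤ k_F}`. -/
def BF (kF : ℝ) : Set Z3 := {k | nsq k ≤ kF ^ 2}

/-- The lens `L_ℓ = B_F^c ∩ (B_F + ℓ)`. -/
def lens (kF : ℝ) (ℓ : Z3) : Set Z3 := {p | p ∉ BF kF ∧ p - ℓ ∈ BF kF}

/-- The excitation energy `λ_{ℓ,p} = (|p|² − |p−ℓ|²)/2`. -/
def lam (ℓ p : Z3) : ℝ := (nsq p - nsq (p - ℓ)) / 2

/-- The energy gap `e(q) = | |q|² − min_{p ∈ B_F^c} |p|² + 1/2 |`. -/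
def efun (kF : ℝ) (q : Z3) : ℝ := |nsq q - sInf (nsq '' (BF kF)ᶜ) + 1 / 2|

variable {H : Type*} [NormedAddCommGroup H] [InnerProductSpace ℂ H] [CompleteSpace H]

local postfix:max "†" => ContinuousLinearMap.adjoint

local notation "⟪" x ", " y "⟫" => @inner ℂ _ _ x y

/-- The canonical anticommutation relations for a family of bounded operators. -/
def CAR (a : Z3 → H →L[ℂ] H) : Prop :=
  (∀ q q' : Z3, a q * a q' + a q' * a q = 0) ∧
  (∀ q q' : Z3, a q * (a q')† + (a q')† * a q = if q = q' then 1 else 0)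

/-- The pair annihilation operator `b_p(k) = a_{p−k} a_p`. -/
def bop (a : Z3 → H →L[ℂ] H) (k p : Z3) : H →L[ℂ] H := a (p - k) * a p

/-- The pair creation operator `b_p^*(k) = a_p^* a_{p−k}^*`. -/
def bopS (a : Z3 → H →L[ℂ] H) (k p : Z3) : H →L[ℂ] H := (a p)† * (a (p - k))†

/-- The quasi-bosonic commutation error `ε_{p,q}(k,ℓ)`. -/
def epsOp (a : Z3 → H →L[ℂ] H) (k ℓ p q : Z3) : H →L[ℂ] H :=
  -((if p = q then (1 : ℂ) else 0) • ((a (q - ℓ))† * a (p - k))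
    + (if p - k = q - ℓ then (1 : ℂ) else 0) • ((a q)† * a p))

/-- The quasi-bosonic Bogoliubov generator
`S = (1/2) Σ_ℓ Σ_{r,s∈L_ℓ} K(ℓ)_{r,s} (b_r(ℓ) b_{−s}(−ℓ) − b_{−s}^*(−ℓ) b_r^*(ℓ))`. -/
def Sgen (kF : ℝ) (a : Z3 → H →L[ℂ] H) (K : Z3 → Z3 → Z3 → ℝ) : H →L[ℂ] H :=
  (1 / 2 : ℂ) • ∑' ℓ : Z3, ∑' r : Z3, ∑' s : Z3,
    (if ℓ ≠ 0 ∧ r ∈ lens kF ℓ ∧ s ∈ lens kF ℓ then ((K ℓ r s : ℝ) : ℂ) else 0) •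
      (bop a ℓ r * bop a (-ℓ) (-s) - bopS a (-ℓ) (-s) * bopS a ℓ r)

/-- The bosonization error operator
`𝓔_p(k) = (1/2) Σ_ℓ Σ_{r,s∈L_ℓ} K(ℓ)_{r,s} {ε_{r,p}(ℓ,k), b_{−s}(−ℓ)}`. -/
def calE (kF : ℝ) (a : Z3 → H →L[ℂ] H) (K : Z3 → Z3 → Z3 → ℝ) (k p : Z3) : H →L[ℂ] H :=
  (1 / 2 : ℂ) • ∑' ℓ : Z3, ∑' r : Z3, ∑' s : Z3,
    (if ℓ ≠ 0 ∧ r ∈ lens kF ℓ ∧ s ∈ lens kF ℓ then ((K ℓ r s : ℝ) : ℂ) else 0) •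
      (epsOp a ℓ k r p * bop a (-ℓ) (-s) + bop a (-ℓ) (-s) * epsOp a ℓ k r p)

/-- In a ring, the commutator of `x₁ x₂` with `y₁ y₂` when the only nonzero anticommutators are
`{x₂, y₁} = d` and `{x₁, y₂} = e`, with `d` central. -/
theorem pair_comm_aux {R : Type*} [Ring R] {x1 x2 y1 y2 d e : R}
    (h21 : x2 * y1 + y1 * x2 = d) (h12 : x1 * y2 + y2 * x1 = e)
    (h11 : x1 * y1 + y1 * x1 = 0) (h22 : x2 * y2 + y2 * x2 = 0)
    (hd : ∀ z, d * z = z * d) :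
    x1 * x2 * (y1 * y2) - y1 * y2 * (x1 * x2) = d * e - d * (y2 * x1) - y1 * e * x2 := by
  have e1 : x1 * x2 * (y1 * y2) = x1 * d * y2 - x1 * y1 * (x2 * y2) := by
    rw [← h21]; noncomm_ring
  have e2 : x1 * y1 = -(y1 * x1) := eq_neg_of_add_eq_zero_left h11
  have e3 : x2 * y2 = -(y2 * x2) := eq_neg_of_add_eq_zero_left h22
  rw [e1, ← hd, e2, e3, ← h12]
  noncomm_ring

theorem pairs_commute_aux {R : Type*} [Ring R] {y1 y2 z1 z2 : R}
    (h11 : y1 * z1 + z1 * y1 = 0) (h12 : y1 * z2 + z2 * y1 = 0)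
    (h21 : y2 * z1 + z1 * y2 = 0) (h22 : y2 * z2 + z2 * y2 = 0) :
    y1 * y2 * (z1 * z2) = z1 * z2 * (y1 * y2) := by
  have e11 := eq_neg_of_add_eq_zero_left h11
  have e12 := eq_neg_of_add_eq_zero_left h12
  have e21 := eq_neg_of_add_eq_zero_left h21
  have e22 := eq_neg_of_add_eq_zero_left h22
  calc y1 * y2 * (z1 * z2) = y1 * (y2 * z1) * z2 := by noncomm_ring
    _ = -(y1 * z1 * (y2 * z2)) := by rw [e21]; noncomm_ring
    _ = -(z1 * (y1 * z2) * y2) := by rw [e11, e22]; noncomm_ring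
    _ = z1 * z2 * (y1 * y2) := by rw [e12]; noncomm_ring

theorem CAR.adjoint {H : Type*} [NormedAddCommGroup H] [InnerProductSpace ℂ H] [CompleteSpace H]
    {a : Z3 → H →L[ℂ] H} (h : CAR a) (q q' : Z3) : (a q)† * (a q')† + (a q')† * (a q)† = 0 := by
  have := congrArg star (h.1 q' q)
  simpa [star_add, star_mul, ContinuousLinearMap.star_eq_adjoint] using this

theorem bopS_commute {H : Type*} [NormedAddCommGroup H] [InnerProductSpace ℂ H] [CompleteSpace H]
    {a : Z3 → H →L[ℂ] H} (h : CAR a) (ℓ r k p : Z3) :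
    bopS a ℓ r * bopS a k p = bopS a k p * bopS a ℓ r :=
  pairs_commute_aux (h.adjoint _ _) (h.adjoint _ _) (h.adjoint _ _) (h.adjoint _ _)

/-- The quasi-bosonic commutation relation `[b_r(ℓ), b_p^*(k)] = δ_{r,p} δ_{ℓ,k} + ε_{r,p}(ℓ,k)`. -/
theorem comm_bop_bopS {H : Type*} [NormedAddCommGroup H] [InnerProductSpace ℂ H]
    [CompleteSpace H] {a : Z3 → H →L[ℂ] H} (h : CAR a) {kF : ℝ} {ℓ r k p : Z3}
    (hr : r ∈ lens kF ℓ) (hp : p ∈ lens kF k) :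
    bop a ℓ r * bopS a k p - bopS a k p * bop a ℓ r
      = (if r = p ∧ ℓ = k then 1 else 0) + epsOp a ℓ k r p := by
  have n1 : r - ℓ ≠ p := fun e => hp.1 (e ▸ hr.2)
  have n2 : r ≠ p - k := fun e => hr.1 (e ▸ hp.2)
  have h11 := h.2 (r - ℓ) p
  have h22 := h.2 r (p - k)
  rw [if_neg n1] at h11
  rw [if_neg n2] at h22
  have key := pair_comm_aux (h.2 r p) (h.2 (r - ℓ) (p - k)) h11 h22
    (by intro z; split_ifs <;> simp)
  unfold bop bopS epsOp
  rw [key]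
  by_cases e1 : r = p
  · subst e1
    by_cases e2 : ℓ = k
    · subst e2
      simp
      abel
    · simp [e2]
  · have : ¬ (r = p ∧ ℓ = k) := fun e => e1 e.1
    by_cases e2 : r - ℓ = p - k <;> simp [e1, e2]

theorem nsq_neg (p : Z3) : nsq (-p) = nsq p := by simp [nsq]

theorem neg_mem_lens {kF : ℝ} {ℓ r : Z3} : -r ∈ lens kF (-ℓ) ↔ r ∈ lens kF ℓ := by
  have : -r - -ℓ = -(r - ℓ) := by abel
  simp only [lens, BF, Set.mem_ofPred_eq, this, nsq_neg]

theorem BF_finite (kF : ℝ) : (BF kF).Finite := by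
  obtain ⟨n, hn⟩ := exists_nat_ge (kF ^ 2)
  refine (Set.finite_Icc (fun _ => -(n : ℤ) : Z3) (fun _ => (n : ℤ))).subset fun q hq => ?_
  have hq' : nsq q ≤ kF ^ 2 := hq
  have key : ∀ i, |q i| ≤ (n : ℤ) := by
    intro i
    have h1 : ((q i : ℝ)) ^ 2 ≤ nsq q :=
      Finset.single_le_sum (f := fun i => ((q i : ℝ)) ^ 2) (fun j _ => sq_nonneg _)
        (Finset.mem_univ i)
    have h2 : (q i) ^ 2 ≤ (n : ℤ) := by exact_mod_cast (h1.trans hq').trans hn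
    have h3 : |q i| ≤ (q i) ^ 2 := by
      rw [← sq_abs]
      exact Int.le_self_sq _
    exact h3.trans h2
  exact ⟨fun i => (abs_le.1 (key i)).1, fun i => (abs_le.1 (key i)).2⟩

theorem lens_finite (kF : ℝ) (ℓ : Z3) : (lens kF ℓ).Finite :=
  ((BF_finite kF).image (· + ℓ)).subset fun p hp => ⟨p - ℓ, hp.2, by simp⟩

/-- All momenta on which the kernel is supported lie in one finite set that is symmetric under
negation. -/
theorem exists_symm_support {kF : ℝ} {K : Z3 → Z3 → Z3 → ℝ}
    (hKsupp : ∀ ℓ r s : Z3, (r ∉ lens kF ℓ ∨ s ∉ lens kF ℓ) → K ℓ r s = 0)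
    (hKfin : {ℓ : Z3 | K ℓ ≠ 0}.Finite) :
    ∃ T : Finset Z3, (∀ q, -q ∈ T ↔ q ∈ T) ∧
      ∀ ℓ r s, K ℓ r s ≠ 0 → ℓ ∈ T ∧ r ∈ T ∧ s ∈ T := by
  set U : Set Z3 := {ℓ : Z3 | K ℓ ≠ 0} ∪ ⋃ ℓ ∈ {ℓ : Z3 | K ℓ ≠ 0}, lens kF ℓ with hU
  have hUf : U.Finite := hKfin.union (hKfin.biUnion fun ℓ _ => lens_finite kF ℓ)
  have hVf : (U ∪ {q | -q ∈ U}).Finite :=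
    hUf.union (hUf.preimage (f := fun q : Z3 => -q) neg_injective.injOn)
  refine ⟨hVf.toFinset, fun q => ?_, fun ℓ r s h => ?_⟩
  · simp [or_comm]
  · have hℓ : K ℓ ≠ 0 := fun e => h (by simp [e])
    have hr : r ∈ lens kF ℓ := by
      by_contra e; exact h (hKsupp _ _ _ (Or.inl e))
    have hs : s ∈ lens kF ℓ := by
      by_contra e; exact h (hKsupp _ _ _ (Or.inr e))
    have hm : ∀ x ∈ lens kF ℓ, x ∈ U := fun x hx => Or.inr (Set.mem_biUnion (x := ℓ) hℓ hx)
    simp only [Set.Finite.mem_toFinset]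
    exact ⟨Or.inl (Or.inl hℓ), Or.inl (hm r hr), Or.inl (hm s hs)⟩

theorem tsum3_eq_sum {E : Type*} [NormedAddCommGroup E] [NormedSpace ℂ E] {c : Z3 → Z3 → Z3 → ℂ}
    {T : Finset Z3} (hT : ∀ ℓ r s, c ℓ r s ≠ 0 → ℓ ∈ T ∧ r ∈ T ∧ s ∈ T) (F : Z3 → Z3 → Z3 → E) :
    ∑' ℓ, ∑' r, ∑' s, c ℓ r s • F ℓ r s = ∑ ℓ ∈ T, ∑ r ∈ T, ∑ s ∈ T, c ℓ r s • F ℓ r s := by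
  have hz : ∀ ℓ r s, (ℓ ∉ T ∨ r ∉ T ∨ s ∉ T) → c ℓ r s = 0 := by
    intro ℓ r s h
    by_contra e
    have := hT ℓ r s e
    tauto
  have h1 : ∀ ℓ r, ∑' s, c ℓ r s • F ℓ r s = ∑ s ∈ T, c ℓ r s • F ℓ r s := fun ℓ r =>
    tsum_eq_sum fun s hs => by simp [hz ℓ r s (by tauto)]
  simp only [h1]
  have h2 : ∀ ℓ, ∑' r, ∑ s ∈ T, c ℓ r s • F ℓ r s = ∑ r ∈ T, ∑ s ∈ T, c ℓ r s • F ℓ r s := fun ℓ =>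
    tsum_eq_sum fun r hr => Finset.sum_eq_zero fun s _ => by simp [hz ℓ r s (by tauto)]
  simp only [h2]
  exact tsum_eq_sum fun ℓ hℓ => Finset.sum_eq_zero fun r _ => Finset.sum_eq_zero fun s _ => by
    simp [hz ℓ r s (by tauto)]

/-- Reindexing a symmetric triple sum by `(ℓ, r, s) ↦ (-ℓ, -s, -r)`. -/
theorem sum3_reindex {E : Type*} [AddCommMonoid E] {T : Finset Z3} (hT : ∀ q, -q ∈ T ↔ q ∈ T)
    (F : Z3 → Z3 → Z3 → E) :
    ∑ ℓ ∈ T, ∑ r ∈ T, ∑ s ∈ T, F ℓ r s = ∑ ℓ ∈ T, ∑ r ∈ T, ∑ s ∈ T, F (-ℓ) (-s) (-r) := by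
  have one : ∀ G : Z3 → E, ∑ q ∈ T, G q = ∑ q ∈ T, G (-q) := fun G =>
    Finset.sum_equiv (Equiv.neg Z3) (fun q => by simp [hT]) (fun q _ => by simp)
  rw [one]
  refine Finset.sum_congr rfl fun ℓ _ => ?_
  rw [one, Finset.sum_comm' (t' := T) (s' := fun _ => T) (by simp), one]

/-- Commutator of `S` with a pair creation operator:
`[S, b_p^*(k)] = Σ_{s∈L_k} K(k)_{p,s} b_{−s}(−k) + 𝓔_p(k)`. -/
theorem stmt5 {H : Type*} [NormedAddCommGroup H] [InnerProductSpace ℂ H] [CompleteSpace H]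
    (kF : ℝ) (hkF : 0 < kF) (a : Z3 → H →L[ℂ] H) (hCAR : CAR a)
    (K : Z3 → Z3 → Z3 → ℝ)
    (hKsymm : ∀ ℓ r s : Z3, K ℓ r s = K ℓ s r)
    (hKsupp : ∀ ℓ r s : Z3, (r ∉ lens kF ℓ ∨ s ∉ lens kF ℓ) → K ℓ r s = 0)
    (hKrefl : ∀ ℓ r s : Z3, K (-ℓ) (-r) (-s) = K ℓ r s)
    (hKfin : {ℓ : Z3 | K ℓ ≠ 0}.Finite) :
    ∀ k : Z3, k ≠ 0 → ∀ p ∈ lens kF k,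
      Sgen kF a K * bopS a k p - bopS a k p * Sgen kF a K
        = (∑' s : Z3, (if s ∈ lens kF k then ((K k p s : ℝ) : ℂ) else 0) • bop a (-k) (-s))
          + calE kF a K k p := by
  intro k hk p hp
  obtain ⟨T, hTneg, hTK⟩ := exists_symm_support hKsupp hKfin
  set c : Z3 → Z3 → Z3 → ℂ := fun ℓ r s =>
    if ℓ ≠ 0 ∧ r ∈ lens kF ℓ ∧ s ∈ lens kF ℓ then ((K ℓ r s : ℝ) : ℂ) else 0 with hc
  have hcK : ∀ ℓ r s, c ℓ r s ≠ 0 →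
      K ℓ r s ≠ 0 ∧ ℓ ≠ 0 ∧ r ∈ lens kF ℓ ∧ s ∈ lens kF ℓ := by
    intro ℓ r s h
    by_cases e : ℓ ≠ 0 ∧ r ∈ lens kF ℓ ∧ s ∈ lens kF ℓ
    · exact ⟨fun e' => h (by simp [hc, e']), e⟩
    · exact absurd (if_neg e) h
  have hcT : ∀ ℓ r s, c ℓ r s ≠ 0 → ℓ ∈ T ∧ r ∈ T ∧ s ∈ T := fun ℓ r s h =>
    hTK ℓ r s (hcK ℓ r s h).1
  have hcsymm : ∀ ℓ r s, c (-ℓ) (-s) (-r) = c ℓ r s := by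
    intro ℓ r s
    simp only [hc, neg_mem_lens, hKrefl, neg_ne_zero, hKsymm ℓ s r]
    congr 1
    simp only [eq_iff_iff]
    tauto
  set B := bopS a k p with hB
  -- the contribution of the Kronecker deltas
  set D : Z3 → Z3 → H →L[ℂ] H := fun ℓ r => if r = p ∧ ℓ = k then 1 else 0 with hD
  have hS : Sgen kF a K = (1 / 2 : ℂ) • ∑ ℓ ∈ T, ∑ r ∈ T, ∑ s ∈ T,
      c ℓ r s • (bop a ℓ r * bop a (-ℓ) (-s) - bopS a (-ℓ) (-s) * bopS a ℓ r) := by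
    rw [← tsum3_eq_sum hcT]; rfl
  have hE : calE kF a K k p = (1 / 2 : ℂ) • ∑ ℓ ∈ T, ∑ r ∈ T, ∑ s ∈ T,
      c ℓ r s • (epsOp a ℓ k r p * bop a (-ℓ) (-s) + bop a (-ℓ) (-s) * epsOp a ℓ k r p) := by
    rw [← tsum3_eq_sum hcT]; rfl
  -- Leibniz rule, summand by summand
  have hterm : ∀ ℓ r s,
      c ℓ r s • (bop a ℓ r * bop a (-ℓ) (-s) - bopS a (-ℓ) (-s) * bopS a ℓ r) * B
        - B * c ℓ r s • (bop a ℓ r * bop a (-ℓ) (-s) - bopS a (-ℓ) (-s) * bopS a ℓ r)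
      = c ℓ r s • (bop a ℓ r * (D (-ℓ) (-s) + epsOp a (-ℓ) k (-s) p))
        + c ℓ r s • ((D ℓ r + epsOp a ℓ k r p) * bop a (-ℓ) (-s)) := by
    intro ℓ r s
    by_cases h0 : c ℓ r s = 0
    · simp [h0]
    obtain ⟨-, -, hr, hs⟩ := hcK ℓ r s h0
    rw [← comm_bop_bopS hCAR hr hp, ← comm_bop_bopS hCAR (neg_mem_lens.2 hs) hp,
      smul_mul_assoc, mul_smul_comm, ← smul_sub, ← smul_add]
    congr 1
    have c1 : bopS a (-ℓ) (-s) * bopS a ℓ r * B = B * (bopS a (-ℓ) (-s) * bopS a ℓ r) := by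
      rw [mul_assoc, bopS_commute hCAR ℓ r, ← mul_assoc, bopS_commute hCAR (-ℓ) (-s) k p,
        mul_assoc]
    rw [sub_mul, mul_sub, c1, ← hB]
    noncomm_ring
  have hre : ∑ ℓ ∈ T, ∑ r ∈ T, ∑ s ∈ T,
        c ℓ r s • (bop a ℓ r * (D (-ℓ) (-s) + epsOp a (-ℓ) k (-s) p))
      = ∑ ℓ ∈ T, ∑ r ∈ T, ∑ s ∈ T,
        c ℓ r s • (bop a (-ℓ) (-s) * (D ℓ r + epsOp a ℓ k r p)) := by
    rw [sum3_reindex hTneg]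
    simp only [hcsymm, neg_neg]
  have hdelta : ∑ ℓ ∈ T, ∑ r ∈ T, ∑ s ∈ T,
        c ℓ r s • (D ℓ r * bop a (-ℓ) (-s) + bop a (-ℓ) (-s) * D ℓ r)
      = (2 : ℂ) • ∑ s ∈ T, c k p s • bop a (-k) (-s) := by
    rw [Finset.sum_eq_single k, Finset.sum_eq_single p, Finset.smul_sum]
    · refine Finset.sum_congr rfl fun s _ => ?_
      simp only [hD, and_self, if_true, one_mul, mul_one]
      rw [smul_comm, two_smul]
    · intro r _ hr
      exact Finset.sum_eq_zero fun s _ => by simp [hD, hr]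
    · intro hpT
      refine Finset.sum_eq_zero fun s _ => ?_
      rw [show c k p s = 0 from by_contra fun e => hpT (hcT k p s e).2.1, zero_smul]
    · intro ℓ _ hℓ
      exact Finset.sum_eq_zero fun r _ => Finset.sum_eq_zero fun s _ => by simp [hD, hℓ]
    · intro hkT
      refine Finset.sum_eq_zero fun r _ => Finset.sum_eq_zero fun s _ => ?_
      rw [show c k r s = 0 from by_contra fun e => hkT (hcT k r s e).1, zero_smul]
  have hlin : (∑' s : Z3, (if s ∈ lens kF k then ((K k p s : ℝ) : ℂ) else 0) • bop a (-k) (-s))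
      = ∑ s ∈ T, c k p s • bop a (-k) (-s) := by
    have hcc : ∀ s, (if s ∈ lens kF k then ((K k p s : ℝ) : ℂ) else 0) = c k p s := by
      intro s; simp [hc, hk, hp]
    simp only [hcc]
    refine tsum_eq_sum fun s hs => ?_
    rw [show c k p s = 0 from by_contra fun e => hs (hcT k p s e).2.2, zero_smul]
  calc Sgen kF a K * B - B * Sgen kF a K
      = (1 / 2 : ℂ) • ∑ ℓ ∈ T, ∑ r ∈ T, ∑ s ∈ T,
          (c ℓ r s • (bop a ℓ r * (D (-ℓ) (-s) + epsOp a (-ℓ) k (-s) p))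
            + c ℓ r s • ((D ℓ r + epsOp a ℓ k r p) * bop a (-ℓ) (-s))) := by
        rw [hS, smul_mul_assoc, mul_smul_comm, ← smul_sub]
        simp only [Finset.sum_mul, Finset.mul_sum, ← Finset.sum_sub_distrib, hterm]
    _ = (1 / 2 : ℂ) • (∑ ℓ ∈ T, ∑ r ∈ T, ∑ s ∈ T,
            c ℓ r s • (D ℓ r * bop a (-ℓ) (-s) + bop a (-ℓ) (-s) * D ℓ r)
          + ∑ ℓ ∈ T, ∑ r ∈ T, ∑ s ∈ T, c ℓ r s •
            (epsOp a ℓ k r p * bop a (-ℓ) (-s) + bop a (-ℓ) (-s) * epsOp a ℓ k r p)) := by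
        simp only [Finset.sum_add_distrib]
        rw [hre]
        simp only [← Finset.sum_add_distrib, ← smul_add]
        congr 1
        refine Finset.sum_congr rfl fun ℓ _ => Finset.sum_congr rfl fun r _ =>
          Finset.sum_congr rfl fun s _ => ?_
        congr 1
        rw [mul_add, add_mul]
        abel
    _ = _ := by
        rw [hdelta, hlin, hE, smul_add, smul_smul]
        norm_num
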